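/- arXiv:2404.05948 — 3 statements merged into one kernel-verified Lean document; each statement's English description precedes it below -/
import Mathlib

section
/- Let a, b ∈ F_p be nonzero floating-point numbers with ufp(a) ≤ ufp(b) and uls(a) ≥ ulp(b). Suppose s is a faithful rounding of a + b, d is a faithful rounding of s − a, and t is a faithful rounding of b − d, where the three roundings may be chosen independently (different rounding directions are allowed). Then s + t = a + b exactly. -/
/-!
Measured in units of `u = ulp b`, both operands are integers of absolute value at most `2 ^ p - 1`
(`Fp.exists_eq_mul_ulp` for `b`; `exists_eq_mul_of_le_uls` and `ufp a ≤ ufp b` for `a`).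
Every integer multiple `m * u` with `|m| ≤ 2 ^ p`, and every even one with `|m| ≤ 2 ^ (p + 1)`, is a
floating-point number. So either `a + b` is representable, and then all three operations are exact,
or `a + b = n * u` with `n` odd and `|n| > 2 ^ p`. In the latter case the floating-point numbers
around `a + b` are even multiples of `u`, so a faithful rounding gives `s = a + b + δ` with
`δ = ± u` (`Faithful.eq_of_odd`). Then `s - a = b + δ` is at most `2 ^ p * u` in absolute value, so
it is representable, `d = b + δ`, and finally `t = b - d = -δ`.
-/

/-- The radix-2, precision-`p` floating-point numbers with unlimited exponent range. -/
def Fp (p : ℕ) : Set ℝ := {x : ℝ | ∃ M e : ℤ, |M| ≤ 2 ^ p - 1 ∧ x = (M : ℝ) * (2 : ℝ) ^ e}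

/-- Round toward `-∞`: the largest floating-point number `≤ x`. -/
noncomputable def RD (p : ℕ) (x : ℝ) : ℝ := sSup {f : ℝ | f ∈ Fp p ∧ f ≤ x}

/-- Round toward `+∞`: the smallest floating-point number `≥ x`. -/
noncomputable def RU (p : ℕ) (x : ℝ) : ℝ := sInf {f : ℝ | f ∈ Fp p ∧ x ≤ f}

/-- `y` is a faithful rounding of `x`. -/
def Faithful (p : ℕ) (x y : ℝ) : Prop := y = RD p x ∨ y = RU p x

/-- Unit in the first place: `2 ^ ⌊log₂ |x|⌋` (for nonzero `x`). -/
noncomputable def ufp (x : ℝ) : ℝ := (2 : ℝ) ^ (Int.log 2 |x|)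

/-- Unit in the last place: `2 ^ (⌊log₂ |x|⌋ - p + 1)` (for nonzero `x`). -/
noncomputable def ulp (p : ℕ) (x : ℝ) : ℝ := (2 : ℝ) ^ (Int.log 2 |x| - (p : ℤ) + 1)

/-- Unit in the last significant place: the largest power `2 ^ k` such that
`x · 2 ^ (-k)` is an integer (for nonzero `x ∈ F_p`). -/
noncomputable def uls (x : ℝ) : ℝ :=
  sSup {y : ℝ | ∃ k : ℤ, y = (2 : ℝ) ^ k ∧ ∃ m : ℤ, x = (m : ℝ) * (2 : ℝ) ^ k}

/-- The bound `2 ^ p` (rather than `2 ^ p - 1`) is allowed because `2 ^ p` is a power of two. -/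
lemma mul_zpow_mem_Fp {p : ℕ} (hp : 2 ≤ p) {m : ℤ} (k : ℤ) (hm : |m| ≤ 2 ^ p) :
    (m : ℝ) * (2 : ℝ) ^ k ∈ Fp p := by
  have h4 : (4 : ℤ) ≤ 2 ^ p := by
    calc (4 : ℤ) = 2 ^ 2 := by norm_num
      _ ≤ 2 ^ p := pow_le_pow_right₀ (by norm_num) hp
  rcases hm.lt_or_eq with h | h
  · exact ⟨m, k, by omega, rfl⟩
  · rcases eq_or_eq_neg_of_abs_eq h with h | h
    · refine ⟨1, p + k, by norm_num; omega, ?_⟩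
      rw [h, zpow_add₀ (by norm_num)]; push_cast; simp
    · refine ⟨-1, p + k, by norm_num; omega, ?_⟩
      rw [h, zpow_add₀ (by norm_num)]; push_cast; simp

lemma Faithful.eq_of_mem {p : ℕ} {x y : ℝ} (hx : x ∈ Fp p) (h : Faithful p x y) : y = x := by
  rcases h with h | h
  · rw [h]
    exact IsGreatest.csSup_eq ⟨⟨hx, le_rfl⟩, fun f hf => hf.2⟩
  · rw [h]
    exact IsLeast.csInf_eq ⟨⟨hx, le_rfl⟩, fun f hf => hf.2⟩

/-- Beyond `2 ^ p * 2 ^ k`, floating-point numbers are even multiples of `2 ^ k`. -/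
lemma Fp.exists_even_of_le {p : ℕ} {k : ℤ} {f : ℝ} (hf : f ∈ Fp p)
    (h : (2 : ℝ) ^ p * (2 : ℝ) ^ k ≤ |f|) : ∃ j : ℤ, f = ((2 * j : ℤ) : ℝ) * (2 : ℝ) ^ k := by
  obtain ⟨M, e, hM, rfl⟩ := hf
  have hM' : |(M : ℝ)| < 2 ^ p := by
    have : |M| < 2 ^ p := by omega
    exact_mod_cast this
  have hke : k < e := by
    by_contra hle
    have h1 : (2 : ℝ) ^ e ≤ 2 ^ k := zpow_le_zpow_right₀ (by norm_num) (by omega)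
    have h2 : (0 : ℝ) < 2 ^ e := by positivity
    rw [abs_mul, abs_of_pos h2] at h
    have h3 : |(M : ℝ)| * 2 ^ e < 2 ^ p * 2 ^ e := mul_lt_mul_of_pos_right hM' h2
    have h4 : (2 : ℝ) ^ p * 2 ^ e ≤ 2 ^ p * 2 ^ k := by gcongr
    linarith
  obtain ⟨i, hi⟩ := Int.eq_ofNat_of_zero_le (show 0 ≤ e - k - 1 by omega)
  refine ⟨M * 2 ^ i, ?_⟩
  obtain rfl : e = i + 1 + k := by omega
  rw [zpow_add₀ (by norm_num), zpow_add₀ (by norm_num)]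
  push_cast
  simp only [zpow_natCast, zpow_one]
  ring

lemma Faithful.eq_of_odd {p : ℕ} (hp : 2 ≤ p) {n k : ℤ} {s : ℝ} (hodd : Odd n)
    (h1 : 2 ^ p < |n|) (h2 : |n| < 2 ^ (p + 1)) (hs : Faithful p ((n : ℝ) * (2 : ℝ) ^ k) s) :
    s = ((n - 1 : ℤ) : ℝ) * (2 : ℝ) ^ k ∨ s = ((n + 1 : ℤ) : ℝ) * (2 : ℝ) ^ k := by
  have hu : (0 : ℝ) < 2 ^ k := by positivity
  obtain ⟨j, rfl⟩ := hodd
  have hpow : (2 : ℤ) ^ (p + 1) = 2 * 2 ^ p := by ring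
  rw [hpow] at h2
  have heven : ∀ i : ℤ, |i| ≤ 2 ^ p → ((2 * i : ℤ) : ℝ) * (2 : ℝ) ^ k ∈ Fp p := by
    intro i hi
    have := mul_zpow_mem_Fp hp (k + 1) hi
    rw [zpow_add₀ (by norm_num)] at this
    convert this using 1
    push_cast
    rw [zpow_one]
    ring
  -- A floating-point number in the open interval of radius one unit around `n` would be even.
  have key : ∀ f ∈ Fp p, ((2 * j : ℤ) : ℝ) * 2 ^ k < f →
      f < ((2 * j + 2 : ℤ) : ℝ) * 2 ^ k → False := by
    intro f hf hlo hhi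
    have hbig : (2 : ℝ) ^ p * (2 : ℝ) ^ k ≤ |f| := by
      rcases lt_abs.mp h1 with h | h
      · have h' : (2 : ℤ) ^ p ≤ 2 * j := by omega
        have h'' : (2 : ℝ) ^ p ≤ ((2 * j : ℤ) : ℝ) := by exact_mod_cast h'
        have := mul_le_mul_of_nonneg_right h'' hu.le
        exact le_trans (by linarith) (le_abs_self f)
      · have h' : (2 : ℤ) ^ p ≤ -(2 * j + 2) := by omega
        have h'' : (2 : ℝ) ^ p ≤ -((2 * j + 2 : ℤ) : ℝ) := by exact_mod_cast h'
        have := mul_le_mul_of_nonneg_right h'' hu.le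
        exact le_trans (by linarith) (neg_le_abs f)
    obtain ⟨i, rfl⟩ := Fp.exists_even_of_le hf hbig
    have g1 : 2 * j < 2 * i := by exact_mod_cast lt_of_mul_lt_mul_right hlo hu.le
    have g2 : 2 * i < 2 * j + 2 := by exact_mod_cast lt_of_mul_lt_mul_right hhi hu.le
    omega
  have hj := abs_lt.mp h2
  rcases hs with hs | hs
  · left
    rw [hs, show 2 * j + 1 - 1 = 2 * j by ring]
    refine IsGreatest.csSup_eq ⟨⟨?_, ?_⟩, fun f hf => ?_⟩
    · exact heven j (abs_le.mpr ⟨by omega, by omega⟩)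
    · gcongr
      omega
    · by_contra hlt
      refine key f hf.1 (not_le.mp hlt) (hf.2.trans_lt ?_)
      gcongr
      omega
  · right
    rw [hs, show 2 * j + 1 + 1 = 2 * j + 2 by ring]
    refine IsLeast.csInf_eq ⟨⟨?_, ?_⟩, fun f hf => ?_⟩
    · convert heven (j + 1) (abs_le.mpr ⟨by omega, by omega⟩) using 3
      ring
    · gcongr
      omega
    · by_contra hlt
      refine key f hf.1 (lt_of_lt_of_le ?_ hf.2) (not_le.mp hlt)
      gcongr
      omega

lemma abs_lt_zpow_log (x : ℝ) : |x| < (2 : ℝ) ^ (Int.log 2 |x| + 1) := by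
  exact_mod_cast Int.lt_zpow_succ_log_self (b := 2) (by norm_num) |x|

lemma Fp.exists_eq_mul_ulp {p : ℕ} {x : ℝ} (hx : x ∈ Fp p) (hx0 : x ≠ 0) :
    ∃ m : ℤ, x = (m : ℝ) * ulp p x := by
  have hlow : (2 : ℝ) ^ Int.log 2 |x| ≤ |x| := by
    exact_mod_cast Int.zpow_log_le_self (b := 2) (by norm_num) (abs_pos.mpr hx0)
  have hsplit : (2 : ℝ) ^ p * (2 : ℝ) ^ (Int.log 2 |x| - p) = 2 ^ Int.log 2 |x| := by
    rw [← zpow_natCast, ← zpow_add₀ (by norm_num)]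
    congr 1
    ring
  obtain ⟨j, hj⟩ := Fp.exists_even_of_le hx (hsplit.le.trans hlow)
  refine ⟨j, hj.trans ?_⟩
  rw [ulp, zpow_add₀ (by norm_num)]
  push_cast
  rw [zpow_one]
  ring

/-- No boundedness of the set defining `uls` is needed: if its supremum is at least `2 ^ k`, the set
has an element exceeding `2 ^ (k - 1)`, that is, a power `2 ^ j` with `j ≥ k`. -/
lemma exists_eq_mul_of_le_uls {p : ℕ} {x : ℝ} {k : ℤ} (hx : x ∈ Fp p) (h : (2 : ℝ) ^ k ≤ uls x) :
    ∃ m : ℤ, x = (m : ℝ) * (2 : ℝ) ^ k := by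
  have hlt : (2 : ℝ) ^ (k - 1) < uls x :=
    lt_of_lt_of_le (zpow_lt_zpow_right₀ (by norm_num) (by omega)) h
  obtain ⟨M, e, -, hMe⟩ := hx
  unfold uls at hlt
  obtain ⟨y, ⟨j, rfl, m, hm⟩, hy⟩ := exists_lt_of_lt_csSup (by exact ⟨_, e, rfl, M, hMe⟩) hlt
  have hjk : k - 1 < j := (zpow_lt_zpow_iff_right₀ (by norm_num)).mp hy
  obtain ⟨i, hi⟩ := Int.eq_ofNat_of_zero_le (show 0 ≤ j - k by omega)
  obtain rfl : j = i + k := by omega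
  refine ⟨m * 2 ^ i, hm.trans ?_⟩
  rw [zpow_add₀ (by norm_num)]
  push_cast
  rw [zpow_natCast]
  ring

/-- If `a, b ∈ F_p` are nonzero with `ufp a ≤ ufp b` and `uls a ≥ ulp b`, then the
Fast2Sum algorithm executed with (independently chosen) faithful roundings is exact:
`s + t = a + b`. -/
theorem fast2Sum_exact_of_uls_ge_ulp
    (p : ℕ) (hp : 2 ≤ p) (a b : ℝ)
    (ha : a ∈ Fp p) (hb : b ∈ Fp p) (ha0 : a ≠ 0) (hb0 : b ≠ 0)
    (hufp : ufp a ≤ ufp b) (huls : ulp p b ≤ uls a)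
    (s d t : ℝ)
    (hs : Faithful p (a + b) s)
    (hd : Faithful p (s - a) d)
    (ht : Faithful p (b - d) t) :
    s + t = a + b := by
  obtain ⟨B, hB⟩ := Fp.exists_eq_mul_ulp hb hb0
  obtain ⟨A, hA⟩ := exists_eq_mul_of_le_uls ha huls
  have hlog : Int.log 2 |a| ≤ Int.log 2 |b| := (zpow_le_zpow_iff_right₀ (by norm_num)).mp hufp
  have hb' := abs_lt_zpow_log b
  have ha' : |a| < (2 : ℝ) ^ (Int.log 2 |b| + 1) :=
    (abs_lt_zpow_log a).trans_le (zpow_le_zpow_right₀ (by norm_num) (by omega))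
  unfold ulp at hB
  have hsplit : (2 : ℝ) ^ (Int.log 2 |b| + 1) = 2 ^ p * 2 ^ (Int.log 2 |b| - p + 1) := by
    rw [← zpow_natCast, ← zpow_add₀ (by norm_num)]
    congr 1
    ring
  rw [hsplit] at ha' hb'
  generalize Int.log 2 |b| - p + 1 = k at *
  have hu : (0 : ℝ) < 2 ^ k := by positivity
  have bound : ∀ (x : ℝ) (m : ℤ), x = (m : ℝ) * 2 ^ k → |x| < 2 ^ p * 2 ^ k → |m| < 2 ^ p := by
    intro x m hx h
    rw [hx, abs_mul, abs_of_pos hu] at h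
    exact_mod_cast lt_of_mul_lt_mul_right h hu.le
  have hAb := bound a A hA ha'
  have hBb := bound b B hB hb'
  have hpow : (2 : ℤ) ^ (p + 1) = 2 * 2 ^ p := by ring
  have hA2 := abs_lt.mp hAb
  have hB2 := abs_lt.mp hBb
  have hsum : a + b = ((A + B : ℤ) : ℝ) * 2 ^ k := by
    rw [hA, hB]
    push_cast
    ring
  -- Once `s = a + b + δ * 2 ^ k` with an integer `|δ| ≤ 1`, the last two operations are exact.
  have finish : ∀ δ : ℤ, |δ| ≤ 1 → s = ((A + B + δ : ℤ) : ℝ) * 2 ^ k → s + t = a + b := by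
    intro δ hδ hsδ
    have hδ2 := abs_le.mp hδ
    have e1 : s - a = ((B + δ : ℤ) : ℝ) * 2 ^ k := by
      rw [hsδ, hA]
      push_cast
      ring
    rw [e1] at hd
    have hdeq := hd.eq_of_mem (mul_zpow_mem_Fp hp k (abs_le.mpr ⟨by omega, by omega⟩))
    have e2 : b - d = ((-δ : ℤ) : ℝ) * 2 ^ k := by
      rw [hdeq, hB]
      push_cast
      ring
    rw [e2] at ht
    have hteq := ht.eq_of_mem (mul_zpow_mem_Fp hp k (abs_le.mpr ⟨by omega, by omega⟩))
    rw [hteq, hsδ, hsum]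
    push_cast
    ring
  rw [hsum] at hs
  by_cases hrep : ((A + B : ℤ) : ℝ) * (2 : ℝ) ^ k ∈ Fp p
  · exact finish 0 (by norm_num) (by rw [hs.eq_of_mem hrep, add_zero])
  have hlarge : 2 ^ p < |A + B| := by
    by_contra hle
    exact hrep (mul_zpow_mem_Fp hp k (not_lt.mp hle))
  have hodd : Odd (A + B) := by
    by_contra hne
    obtain ⟨j, hj⟩ := even_iff_two_dvd.mp (Int.not_odd_iff_even.mp hne)
    have hmem := mul_zpow_mem_Fp hp (m := j) (k + 1) (abs_le.mpr ⟨by omega, by omega⟩)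
    apply hrep
    convert hmem using 1
    rw [hj, zpow_add₀ (by norm_num)]
    push_cast
    rw [zpow_one]
    ring
  rcases hs.eq_of_odd hp hodd hlarge (abs_lt.mpr ⟨by omega, by omega⟩) with h | h
  · exact finish (-1) (by norm_num) h
  · exact finish 1 (by norm_num) h
end

section
/- Let p ≥ 2, a = 2^(−1) + 2^(−p) and b = 1 + 2^(1−p); then a, b ∈ F_p and uls(a) = ulp(b)/2. If the Fast2Sum algorithm is executed with RD at every step, i.e. s = RD(a + b), d = RD(s − a), t = RD(b − d), then s + t − (a + b) = 2^(−p); in particular s + t ≠ a + b. (This shows that the condition uls(a) ≥ ulp(b) in the exactness lemma for Fast2Sum under faithful rounding cannot be weakened.) -/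
lemma RD_eq_of_isGreatest {p : ℕ} {x f : ℝ} (hf : f ∈ Fp p) (hfx : f ≤ x)
    (h : ∀ g ∈ Fp p, g ≤ x → g ≤ f) : RD p x = f :=
  IsGreatest.csSup_eq ⟨⟨hf, hfx⟩, fun g hg => h g hg.1 hg.2⟩

/-- Above `2 ^ (p - 1) * 2 ^ e` (with `p = r + 1`) no float lies strictly between two consecutive
multiples of `2 ^ e`: a float with exponent at least `e` is such a multiple, and one with a smaller
exponent is below `2 ^ p * 2 ^ (e - 1)`. -/
lemma le_of_lt_next {r : ℕ} {N e : ℤ} (hN : 2 ^ r ≤ N) {g : ℝ} (hg : g ∈ Fp (r + 1))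
    (hlt : g < ((N : ℝ) + 1) * (2 : ℝ) ^ e) : g ≤ (N : ℝ) * (2 : ℝ) ^ e := by
  obtain ⟨M, k, hM, rfl⟩ := hg
  have he : (0 : ℝ) < (2 : ℝ) ^ e := by positivity
  rcases le_or_gt e k with hk | hk
  · obtain ⟨j, rfl⟩ := Int.le.dest hk
    rw [zpow_add₀ two_ne_zero, zpow_natCast] at *
    have h1 : (M : ℝ) * 2 ^ j < N + 1 := by
      by_contra! hc
      have := mul_le_mul_of_nonneg_right hc he.le
      linarith
    have h2 : M * 2 ^ j < N + 1 := by exact_mod_cast h1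
    have h3 : M * 2 ^ j ≤ N := by omega
    have h4 : (M : ℝ) * 2 ^ j ≤ N := by exact_mod_cast h3
    have := mul_le_mul_of_nonneg_right h4 he.le
    linarith
  · have hk' : (2 : ℝ) ^ k ≤ (2 : ℝ) ^ (e - 1) :=
      zpow_le_zpow_right₀ one_le_two (by omega)
    rw [zpow_sub_one₀ two_ne_zero] at hk'
    have hM' : M ≤ 2 * N := by
      have := (abs_le.mp hM).2
      rw [pow_succ] at this
      omega
    have hM2 : (M : ℝ) ≤ 2 * N := by exact_mod_cast hM'
    have hN0 : (0 : ℝ) ≤ N := by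
      have : (0 : ℤ) ≤ N := le_trans (by positivity) hN
      exact_mod_cast this
    calc (M : ℝ) * 2 ^ k ≤ 2 * N * 2 ^ k := by gcongr
      _ ≤ 2 * N * (2 ^ e * 2⁻¹) := by gcongr
      _ = N * 2 ^ e := by ring

lemma RD_eq_of_grid {r : ℕ} {N e : ℤ} (hN : 2 ^ r ≤ N) {x : ℝ}
    (hf : (N : ℝ) * (2 : ℝ) ^ e ∈ Fp (r + 1)) (hx : (N : ℝ) * (2 : ℝ) ^ e ≤ x)
    (hx' : x < ((N : ℝ) + 1) * (2 : ℝ) ^ e) : RD (r + 1) x = (N : ℝ) * (2 : ℝ) ^ e :=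
  RD_eq_of_isGreatest hf hx fun _ hg hgx => le_of_lt_next hN hg (hgx.trans_lt hx')

lemma RD_of_mem {p : ℕ} {x : ℝ} (hx : x ∈ Fp p) : RD p x = x :=
  RD_eq_of_isGreatest hx le_rfl fun _ _ h => h

lemma uls_of_odd {m k : ℤ} (hm : Odd m) : uls ((m : ℝ) * (2 : ℝ) ^ k) = (2 : ℝ) ^ k := by
  refine IsGreatest.csSup_eq ⟨⟨k, rfl, m, rfl⟩, ?_⟩
  rintro _ ⟨l, rfl, n, hn⟩
  refine zpow_le_zpow_right₀ one_le_two ?_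
  by_contra! hl
  obtain ⟨j, rfl⟩ := Int.le.dest (Int.add_one_le_of_lt hl)
  rw [zpow_add₀ two_ne_zero, zpow_add₀ two_ne_zero, zpow_natCast, zpow_one] at hn
  have hk : (2 : ℝ) ^ k ≠ 0 := by positivity
  have h1 : (m : ℝ) = 2 * (n * 2 ^ j) := mul_right_cancel₀ hk (by linarith)
  have h2 : m = 2 * (n * 2 ^ j) := by exact_mod_cast h1
  rw [← Int.not_even_iff_odd] at hm
  exact hm (h2 ▸ even_two_mul _)

/-- For `a = 2⁻¹ + 2⁻ᵖ` and `b = 1 + 2^(1-p)` (which lie in `F_p` and satisfy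
`uls a = ulp b / 2`), Fast2Sum executed with RD at every step produces
`s + t - (a + b) = 2⁻ᵖ`, in particular `s + t ≠ a + b`: the hypothesis
`uls a ≥ ulp b` of the exactness lemma cannot be weakened. -/
theorem fast2Sum_counterexample
    (p : ℕ) (hp : 2 ≤ p) (a b : ℝ)
    (ha : a = (2 : ℝ) ^ (-1 : ℤ) + (2 : ℝ) ^ (-(p : ℤ)))
    (hb : b = 1 + (2 : ℝ) ^ (1 - (p : ℤ))) :
    a ∈ Fp p ∧ b ∈ Fp p ∧ uls a = ulp p b / 2 ∧
      (RD p (a + b) + RD p (b - RD p (RD p (a + b) - a)) - (a + b) = (2 : ℝ) ^ (-(p : ℤ)) ∧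
        RD p (a + b) + RD p (b - RD p (RD p (a + b) - a)) ≠ a + b) := by
  obtain ⟨q, rfl⟩ := Nat.exists_eq_add_of_le' hp
  have hq : (1 : ℤ) ≤ 2 ^ q := one_le_pow₀ (by norm_num)
  have hu2 : (2 : ℝ) ^ (1 - ((q + 2 : ℕ) : ℤ)) = 2 * (2 : ℝ) ^ (-((q + 2 : ℕ) : ℤ)) := by
    rw [sub_eq_add_neg, zpow_add₀ two_ne_zero, zpow_one]
  have hPu : (2 : ℝ) ^ q * (2 : ℝ) ^ (-((q + 2 : ℕ) : ℤ)) = 1 / 4 := by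
    rw [zpow_neg, zpow_natCast, pow_add]
    field_simp
    norm_num
  have hu0 : (0 : ℝ) < (2 : ℝ) ^ (-((q + 2 : ℕ) : ℤ)) := by positivity
  have hu4 : (2 : ℝ) ^ (-((q + 2 : ℕ) : ℤ)) ≤ 1 / 4 := by
    have : (1 : ℝ) ≤ 2 ^ q := one_le_pow₀ (by norm_num)
    nlinarith
  have ha' : a = ((2 * 2 ^ q + 1 : ℤ) : ℝ) * (2 : ℝ) ^ (-((q + 2 : ℕ) : ℤ)) := by
    rw [ha]; push_cast at hPu ⊢; rw [zpow_neg_one]; linarith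
  have hb' : b = ((2 * 2 ^ q + 1 : ℤ) : ℝ) * (2 : ℝ) ^ (1 - ((q + 2 : ℕ) : ℤ)) := by
    rw [hb, hu2]; push_cast at hPu ⊢; linarith
  have hpow : (2 : ℤ) ^ (q + 2) = 4 * 2 ^ q := by ring
  have hM : |(2 * 2 ^ q + 1 : ℤ)| ≤ 2 ^ (q + 2) - 1 := by
    rw [abs_of_nonneg (by omega)]; omega
  have hs : RD (q + 2) (a + b) = 3 / 2 + 2 * (2 : ℝ) ^ (-((q + 2 : ℕ) : ℤ)) := by
    have hval : ((3 * 2 ^ q + 1 : ℤ) : ℝ) * (2 : ℝ) ^ (1 - ((q + 2 : ℕ) : ℤ))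
        = 3 / 2 + 2 * (2 : ℝ) ^ (-((q + 2 : ℕ) : ℤ)) := by
      rw [hu2]; push_cast at hPu ⊢; linarith
    have hmem : ((3 * 2 ^ q + 1 : ℤ) : ℝ) * (2 : ℝ) ^ (1 - ((q + 2 : ℕ) : ℤ))
        ∈ Fp (q + 2) := by
      rcases Nat.eq_zero_or_pos q with rfl | hq0
      -- For `p = 2` the significand `3 * 2 ^ q + 1 = 4` is too large, but the value is `2`.
      · exact ⟨1, 1, by norm_num, by norm_num⟩
      · refine ⟨_, _, ?_, rfl⟩
        have : (2 : ℤ) ≤ 2 ^ q := le_self_pow₀ (by norm_num) (by omega)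
        rw [abs_of_nonneg (by omega)]; omega
    rw [← hval]
    refine RD_eq_of_grid (r := q + 1) ?_ hmem ?_ ?_
    · rw [pow_succ]; omega
    · rw [hval, ha, hb, hu2, zpow_neg_one]; linarith
    · rw [add_mul, hval, ha, hb, hu2, zpow_neg_one]; linarith
  have hd : RD (q + 2) (RD (q + 2) (a + b) - a) = 1 := by
    have hval : ((2 * 2 ^ q : ℤ) : ℝ) * (2 : ℝ) ^ (1 - ((q + 2 : ℕ) : ℤ)) = 1 := by
      rw [hu2]; push_cast at hPu ⊢; linarith
    rw [hs]
    refine (RD_eq_of_grid (r := q + 1) (N := 2 * 2 ^ q) (e := 1 - ((q + 2 : ℕ) : ℤ))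
      ?_ ?_ ?_ ?_).trans hval
    · rw [pow_succ]; omega
    · refine ⟨_, _, ?_, rfl⟩
      rw [abs_of_nonneg (by omega)]; omega
    · rw [hval, ha, zpow_neg_one]; linarith
    · rw [add_mul, hval, ha, hu2, zpow_neg_one]; linarith
  have ht : RD (q + 2) (b - 1) = 2 * (2 : ℝ) ^ (-((q + 2 : ℕ) : ℤ)) := by
    rw [hb, add_sub_cancel_left, ← hu2]
    exact RD_of_mem ⟨1, 1 - ((q + 2 : ℕ) : ℤ), by rw [abs_one]; omega, by rw [Int.cast_one, one_mul]⟩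
  have hlog : Int.log 2 |b| = 0 := by
    have hb1 : 1 ≤ b := by rw [hb, hu2]; linarith
    have hb2 : b < 2 := by rw [hb, hu2]; linarith
    rw [abs_of_nonneg (by linarith)]
    apply le_antisymm
    · have := (Int.lt_zpow_iff_log_lt (b := 2) (x := 1) one_lt_two
        (by linarith : 0 < b)).mp (by simpa using hb2)
      omega
    · exact (Int.zpow_le_iff_le_log (b := 2) (x := 0) one_lt_two
        (by linarith : 0 < b)).mp (by simpa using hb1)
  have herr : RD (q + 2) (a + b) + RD (q + 2) (b - RD (q + 2) (RD (q + 2) (a + b) - a)) - (a + b)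
      = (2 : ℝ) ^ (-((q + 2 : ℕ) : ℤ)) := by
    rw [hd, ht, hs, ha, hb, hu2, zpow_neg_one]; ring
  refine ⟨⟨_, _, hM, ha'⟩, ⟨_, _, hM, hb'⟩, ?_, herr, fun h => ?_⟩
  · rw [ulp, hlog, ha', uls_of_odd ⟨2 ^ q, rfl⟩, zero_sub, neg_add_eq_sub, hu2]; ring
  · rw [h, sub_self] at herr
    exact hu0.ne herr
end

section
/- Let p ≥ 6, u = 2^(1−p), and let o_x, o_y ∈ [1, 1/(8u) − 2]. Let x_h, x_l, y_h, y_l ∈ F_p satisfy |x_l| ≤ o_x·u·|x_h| and |y_l| ≤ o_y·u·|y_h|, and suppose r(x_h, y_h) < 1/2. Then in any execution of accurate double-word addition in faithful rounding, the intermediate values satisfy |w| ≤ |v_h|. -/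
/-- `r(x,y)`: the extent of cancellation when adding `x` and `y`. -/
noncomputable def cancelRatio (x y : ℝ) : ℝ :=
  if x * y < 0 then min |x| |y| / max |x| |y| else 0

/-- All hypotheses of one execution of the accurate double-word addition algorithm
(`(s_h,s_l) = 2Sum(x_h,y_h)`, `(t_h,t_l) = 2Sum(x_l,y_l)`, `c = ∘(s_l+t_h)`,
`(v_h,v_l) = Fast2Sum(s_h,c)`, `w = ∘(t_l+v_l)`, `(z_h,z_l) = Fast2Sum(v_h,w)`)
in faithful rounding, each rounding chosen independently. -/
def AccurateFaithful (p : ℕ) (xh xl yh yl sh a1 b1 da1 db1 sl th a2 b2 da2 db2 tl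
    c vh d1 vl w zh d2 zl : ℝ) : Prop :=
  Faithful p (xh + yh) sh ∧ Faithful p (sh - yh) a1 ∧ Faithful p (sh - a1) b1 ∧
  Faithful p (xh - a1) da1 ∧ Faithful p (yh - b1) db1 ∧ Faithful p (da1 + db1) sl ∧
  Faithful p (xl + yl) th ∧ Faithful p (th - yl) a2 ∧ Faithful p (th - a2) b2 ∧
  Faithful p (xl - a2) da2 ∧ Faithful p (yl - b2) db2 ∧ Faithful p (da2 + db2) tl ∧
  Faithful p (sl + th) c ∧
  Faithful p (sh + c) vh ∧ Faithful p (vh - sh) d1 ∧ Faithful p (c - d1) vl ∧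
  Faithful p (tl + vl) w ∧
  Faithful p (vh + w) zh ∧ Faithful p (zh - vh) d2 ∧ Faithful p (w - d2) zl

/-- The bound `64 = 2 ^ 6` is allowed for the significand although `Fp 6` only allows `63`: the
power of two is rescaled. This covers a ceiling that reaches the next binade. -/
lemma mem_Fp_of_abs_le {p : ℕ} (hp : 6 ≤ p) (M k : ℤ) (hM : |M| ≤ 64) :
    (M : ℝ) * (2 : ℝ) ^ k ∈ Fp p := by
  have h64 : (64 : ℤ) ≤ 2 ^ p := by
    calc (64 : ℤ) = 2 ^ 6 := by norm_num
      _ ≤ 2 ^ p := pow_le_pow_right₀ (by norm_num) hp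
  have h2 : (2 : ℝ) ^ (k + 6) = 2 ^ k * 64 := by
    rw [zpow_add₀ (by norm_num)]; norm_num
  rcases abs_le.mp hM with ⟨h1, h3⟩
  rcases eq_or_lt_of_le h3 with h | h
  · refine ⟨1, k + 6, by norm_num; omega, ?_⟩
    rw [h2, h]; push_cast; ring
  rcases eq_or_lt_of_le h1 with h' | h'
  · refine ⟨-1, k + 6, by norm_num; omega, ?_⟩
    rw [h2, ← h']; push_cast; ring
  · exact ⟨M, k, by rw [abs_le]; constructor <;> omega, rfl⟩

/-- Every real number is enclosed by two floating-point numbers at relative distance at most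
`1 / 32`, namely its roundings to six significant bits. -/
lemma exists_near {p : ℕ} (hp : 6 ≤ p) (x : ℝ) :
    ∃ f ∈ Fp p, ∃ g ∈ Fp p, f ≤ x ∧ x ≤ g ∧ x - f ≤ |x| / 32 ∧ g - x ≤ |x| / 32 := by
  rcases eq_or_ne x 0 with rfl | hx
  · have h0 : (0 : ℝ) ∈ Fp p := by simpa using mem_Fp_of_abs_le hp 0 0 (by norm_num)
    exact ⟨0, h0, 0, h0, by simp⟩
  have hpos : 0 < |x| := abs_pos.mpr hx
  have hlo := Int.zpow_log_le_self (b := 2) (by norm_num) hpos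
  have hhi := Int.lt_zpow_succ_log_self (b := 2) (by norm_num) |x|
  obtain ⟨k, hk⟩ : ∃ k : ℤ, Int.log 2 |x| = k + 5 := ⟨_, (sub_add_cancel _ 5).symm⟩
  rw [hk] at hlo hhi
  push_cast at hlo hhi
  have e5 : (2 : ℝ) ^ (k + 5) = 2 ^ k * 32 := by
    rw [zpow_add₀ (by norm_num)]; norm_num
  have e6 : (2 : ℝ) ^ (k + 5 + 1) = 2 ^ k * 64 := by
    rw [add_assoc, zpow_add₀ (by norm_num)]; norm_num
  rw [e5] at hlo
  rw [e6] at hhi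
  have hq : (0 : ℝ) < 2 ^ k := by positivity
  set q : ℝ := 2 ^ k with hqdef
  have hz : x = x / q * q := by field_simp
  set z := x / q
  have hzabs : |z| < 64 := by
    rw [hz, abs_mul, abs_of_pos hq] at hhi
    nlinarith
  obtain ⟨hz1, hz2⟩ := abs_lt.mp hzabs
  have hf1 := Int.floor_le z
  have hf2 := Int.lt_floor_add_one z
  have hc1 := Int.le_ceil z
  have hc2 := Int.ceil_lt_add_one z
  have hFM : |⌊z⌋| ≤ 64 := by
    rw [abs_le]
    constructor
    · exact Int.le_floor.mpr (by push_cast; linarith)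
    · exact_mod_cast (hf1.trans hz2.le)
  have hCM : |⌈z⌉| ≤ 64 := by
    rw [abs_le]
    constructor
    · exact_mod_cast (hz1.le.trans hc1)
    · exact Int.ceil_le.mpr (by push_cast; linarith)
  refine ⟨_, mem_Fp_of_abs_le hp ⌊z⌋ k hFM, _, mem_Fp_of_abs_le hp ⌈z⌉ k hCM, ?_, ?_, ?_, ?_⟩ <;>
    rw [← hqdef]
  · nlinarith
  · nlinarith
  · nlinarith
  · nlinarith

lemma faithful_error {p : ℕ} (hp : 6 ≤ p) {x y : ℝ} (h : Faithful p x y) :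
    |y - x| ≤ |x| / 32 := by
  obtain ⟨f, hf, g, hg, hfx, hxg, hf', hg'⟩ := exists_near hp x
  rw [abs_le]
  rcases h with rfl | rfl
  · have h1 : RD p x ≤ x := csSup_le ⟨f, hf, hfx⟩ fun _ h => h.2
    have h2 : f ≤ RD p x := le_csSup ⟨x, fun _ h => h.2⟩ ⟨hf, hfx⟩
    constructor <;> linarith [abs_nonneg x]
  · have h1 : x ≤ RU p x := le_csInf ⟨g, hg, hxg⟩ fun _ h => h.2
    have h2 : RU p x ≤ g := csInf_le ⟨x, fun _ h => h.2⟩ ⟨hg, hxg⟩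
    constructor <;> linarith [abs_nonneg x]

/-- Two-sided form of `faithful_error`, relative to a two-sided bound on the exact argument. -/
lemma faithful_bounds {p : ℕ} (hp : 6 ≤ p) {x y B : ℝ} (h : Faithful p x y)
    (hl : -B ≤ x) (hr : x ≤ B) : x - B / 32 ≤ y ∧ y ≤ x + B / 32 := by
  have h1 := abs_le.mp (faithful_error hp h)
  have h2 : |x| ≤ B := abs_le.mpr ⟨hl, hr⟩
  constructor <;> linarith [h1.1, h1.2]

/-- In faithful rounding the second output of `2Sum` is only an approximation of the rounding
error of the sum, but it remains small relative to the operands and their sum. -/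
lemma twoSum_error_bound {p : ℕ} (hp : 6 ≤ p) {a b s a' b' da db t A B : ℝ}
    (ha : |a| ≤ A) (hb : |b| ≤ A) (hab : |a + b| ≤ B)
    (hs : Faithful p (a + b) s) (ha' : Faithful p (s - b) a') (hb' : Faithful p (s - a') b')
    (hda : Faithful p (a - a') da) (hdb : Faithful p (b - b') db)
    (ht : Faithful p (da + db) t) : |t| ≤ (A + B) / 25 := by
  have hA : 0 ≤ A := (abs_nonneg a).trans ha
  have hB : 0 ≤ B := (abs_nonneg _).trans hab
  obtain ⟨a1, a2⟩ := abs_le.mp ha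
  obtain ⟨b1, b2⟩ := abs_le.mp hb
  obtain ⟨s1, s2⟩ := abs_le.mp hab
  obtain ⟨e1, e2⟩ := faithful_bounds hp hs s1 s2
  obtain ⟨f1, f2⟩ := faithful_bounds hp ha' (B := A + B / 32) (by linarith) (by linarith)
  obtain ⟨g1, g2⟩ := faithful_bounds hp hb' (B := A + (A + B / 32) / 32)
    (by linarith) (by linarith)
  obtain ⟨h1, h2⟩ := faithful_bounds hp hda (B := B / 32 + (A + B / 32) / 32)
    (by linarith) (by linarith)
  obtain ⟨i1, i2⟩ := faithful_bounds hp hdb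
    (B := (A + B / 32) / 32 + (A + (A + B / 32) / 32) / 32) (by linarith) (by linarith)
  obtain ⟨j1, j2⟩ := faithful_bounds hp ht (B := (A + B) / 27) (by linarith) (by linarith)
  rw [abs_le]
  constructor <;> linarith

lemma abs_add_le_of_ratio {x y : ℝ} (h : cancelRatio x y < 1 / 2) :
    |x| + |y| ≤ 3 * |x + y| := by
  unfold cancelRatio at h
  split_ifs at h with hxy
  · have hx : x ≠ 0 := by rintro rfl; simp at hxy
    have hM : 0 < max |x| |y| := lt_max_of_lt_left (abs_pos.mpr hx)
    rw [div_lt_iff₀ hM] at h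
    rcases le_total |x| |y| with h3 | h3
    · rw [min_eq_left h3, max_eq_right h3] at h
      have := abs_sub (x + y) x
      rw [add_sub_cancel_left] at this
      linarith
    · rw [min_eq_right h3, max_eq_left h3] at h
      have := abs_sub (x + y) y
      rw [add_sub_cancel_right] at this
      linarith
  · have : |x + y| = |x| + |y| := by
      rw [abs_add_eq_add_abs_iff]
      rcases mul_nonneg_iff.mp (not_lt.mp hxy) with h | h
      · exact Or.inl h
      · exact Or.inr h
    linarith [abs_nonneg x, abs_nonneg y]

/-- The bound `o ≤ 1 / (8 u) - 2` makes the low word at most an eighth of the high word. -/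
lemma low_word_le {u o h l : ℝ} (hu : 0 < u) (ho : o ≤ 1 / (8 * u) - 2)
    (hl : |l| ≤ o * u * |h|) : |l| ≤ |h| / 8 := by
  have h1 : o * u ≤ 1 / 8 := by
    calc o * u ≤ (1 / (8 * u) - 2) * u := by gcongr
      _ = 1 / 8 - 2 * u := by field_simp
      _ ≤ 1 / 8 := by linarith
  nlinarith [abs_nonneg h]

theorem accurate_w_le_vh_of_mild_cancellation
    (p : ℕ) (hp : 6 ≤ p) (u : ℝ) (hu : u = (2 : ℝ) ^ (1 - (p : ℤ)))
    (ox oy : ℝ) (hox1 : 1 ≤ ox) (hox2 : ox ≤ 1 / (8 * u) - 2)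
    (hoy1 : 1 ≤ oy) (hoy2 : oy ≤ 1 / (8 * u) - 2)
    (xh xl yh yl : ℝ)
    (hxh : xh ∈ Fp p) (hxl : xl ∈ Fp p) (hyh : yh ∈ Fp p) (hyl : yl ∈ Fp p)
    (hovx : |xl| ≤ ox * u * |xh|) (hovy : |yl| ≤ oy * u * |yh|)
    (hr : cancelRatio xh yh < 1 / 2)
    (sh a1 b1 da1 db1 sl th a2 b2 da2 db2 tl c vh d1 vl w zh d2 zl : ℝ)
    (hrun : AccurateFaithful p xh xl yh yl sh a1 b1 da1 db1 sl th a2 b2 da2 db2 tl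
      c vh d1 vl w zh d2 zl) :
    |w| ≤ |vh| := by
  obtain ⟨hsh, ha1, hb1, hda1, hdb1, hsl, hth, ha2, hb2, hda2, hdb2, htl, hc, hvh, hd1, hvl,
    hw, -, -, -⟩ := hrun
  have hu0 : 0 < u := by rw [hu]; positivity
  have hX := low_word_le hu0 hox2 hovx
  have hY := low_word_le hu0 hoy2 hovy
  have hS := abs_add_le_of_ratio hr
  obtain ⟨S, hSdef⟩ : ∃ S, S = |xh + yh| := ⟨_, rfl⟩
  rw [← hSdef] at hS
  have hS0 : 0 ≤ S := hSdef ▸ abs_nonneg _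
  -- The larger of `|xh|`, `|yh|` is at most `2 S`: the two differ by at most `S` and sum to `≤ 3 S`.
  have hd : |xh| ≤ S + |yh| := by
    have := abs_sub (xh + yh) yh
    rw [add_sub_cancel_right] at this
    linarith
  have hd' : |yh| ≤ S + |xh| := by
    have := abs_sub (xh + yh) xh
    rw [add_sub_cancel_left] at this
    linarith
  have hT : |xl + yl| ≤ 3 / 8 * S := (abs_add_le _ _).trans (by linarith)
  have hsl' := twoSum_error_bound hp (A := 2 * S) (B := S) (by linarith) (by linarith)
    hSdef.ge hsh ha1 hb1 hda1 hdb1 hsl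
  have htl' := twoSum_error_bound hp (A := 3 / 8 * S)
    (by linarith [abs_nonneg yh]) (by linarith [abs_nonneg xh]) hT hth ha2 hb2 hda2 hdb2 htl
  obtain ⟨p1, p2⟩ := abs_le.mp hsl'
  obtain ⟨q1, q2⟩ := abs_le.mp htl'
  obtain ⟨t1, t2⟩ := abs_le.mp hT
  obtain ⟨s1, s2⟩ := abs_le.mp hSdef.ge
  obtain ⟨sh1, sh2⟩ := faithful_bounds hp hsh s1 s2
  obtain ⟨th1, th2⟩ := faithful_bounds hp hth t1 t2
  obtain ⟨c1, c2⟩ := faithful_bounds hp hc (B := 51 / 100 * S) (by linarith) (by linarith)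
  obtain ⟨v1, v2⟩ := faithful_bounds hp hvh (B := 157 / 100 * S) (by linarith) (by linarith)
  obtain ⟨d1l, d1u⟩ := faithful_bounds hp hd1 (B := 3 / 5 * S) (by linarith) (by linarith)
  obtain ⟨l1, l2⟩ := faithful_bounds hp hvl (B := 7 / 100 * S) (by linarith) (by linarith)
  obtain ⟨w1, w2⟩ := faithful_bounds hp hw (B := 11 / 100 * S) (by linarith) (by linarith)
  have hwS : |w| ≤ S / 5 := abs_le.mpr ⟨by linarith, by linarith⟩
  have hvS : 3 / 10 * S ≤ |vh| := by
    rcases abs_cases (xh + yh) with ⟨h, -⟩ | ⟨h, -⟩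
    · linarith [le_abs_self vh]
    · linarith [neg_abs_le vh]
  linarith
end
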